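/- arXiv:1807.03606 — 2 statements merged into one kernel-verified Lean document; each statement's English description precedes it below -/
import Mathlib

section
/- Let X be a nonempty compact topological space and T : X → X a continuous map. Then there exists a uniformly recurrent point x ∈ X, i.e., for every open neighborhood U of x there exists N ∈ ℕ such that for every m ∈ ℕ there exists k ≤ N with T^[m+k](x) ∈ U. -/
/-!
By Zorn's lemma and compactness there is a minimal nonempty closed forward-invariant set `M`, and
every point of `M` is uniformly recurrent. Indeed, if `U` is an open set meeting `M`, the points of
`M` whose whole forward orbit avoids `U` form a closed invariant proper subset of `M`, which is
empty by minimality. Hence the sets `T^[k] ⁻¹' U` cover `M`, finitely many of them suffice, and the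
largest exponent used bounds the gaps between return times of any orbit in `M`.
-/

/-- Existence of a minimal subsystem. No separation axiom is needed, since the sets in question are
closed and hence compact. -/
lemma exists_minimal_closed_invariant {X : Type*} [TopologicalSpace X] [CompactSpace X]
    [Nonempty X] (T : X → X) :
    ∃ M : Set X, Minimal (fun A : Set X => IsClosed A ∧ A.Nonempty ∧ Set.MapsTo T A A) M := by
  refine zorn_superset {A : Set X | IsClosed A ∧ A.Nonempty ∧ Set.MapsTo T A A} ?_
  intro c hc hchain
  rcases c.eq_empty_or_nonempty with rfl | hne
  · exact ⟨Set.univ, ⟨isClosed_univ, Set.univ_nonempty, Set.mapsTo_univ _ _⟩, by simp⟩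
  · have : Nonempty c := hne.to_subtype
    refine ⟨⋂₀ c, ⟨isClosed_sInter fun A hA => (hc hA).1, ?_, ?_⟩,
      fun A hA => Set.sInter_subset_of_mem hA⟩
    · exact IsCompact.nonempty_sInter_of_directed_nonempty_isCompact_isClosed
        (IsChain.directedOn (r := fun A B : Set X => A ⊇ B) hchain.symm) (fun A hA => (hc hA).2.1)
        (fun A hA => (hc hA).1.isCompact) (fun A hA => (hc hA).1)
    · exact fun x hx A hA => (hc hA).2.2 (hx A hA)

/-- Birkhoff recurrence theorem: a continuous self-map of a nonempty compact
topological space has a uniformly recurrent point. -/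
theorem birkhoff_uniformly_recurrent_point
    {X : Type*} [TopologicalSpace X] [CompactSpace X] [Nonempty X]
    (T : X → X) (hT : Continuous T) :
    ∃ x : X, ∀ U : Set X, IsOpen U → x ∈ U →
      ∃ N : ℕ, ∀ m : ℕ, ∃ k ≤ N, T^[m + k] x ∈ U := by
  obtain ⟨M, ⟨hMc, ⟨x, hx⟩, hMT⟩, hmin⟩ := exists_minimal_closed_invariant T
  refine ⟨x, fun U hU hxU => ?_⟩
  have hopen : ∀ k : ℕ, IsOpen (T^[k] ⁻¹' U) := fun k => hU.preimage (hT.iterate k)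
  have hcover : M ⊆ ⋃ k : ℕ, T^[k] ⁻¹' U := by
    by_contra hcon
    obtain ⟨y, hyM, hy⟩ := Set.not_subset.mp hcon
    have hsub : M ⊆ M \ ⋃ k : ℕ, T^[k] ⁻¹' U := by
      refine hmin ⟨hMc.sdiff (isOpen_iUnion hopen), ⟨y, hyM, hy⟩, ?_⟩ Set.sdiff_subset
      rintro z ⟨hzM, hz⟩
      refine ⟨hMT hzM, fun hTz => hz ?_⟩
      obtain ⟨k, hk⟩ := Set.mem_iUnion.mp hTz
      exact Set.mem_iUnion.mpr ⟨k + 1, hk⟩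
    exact (hsub hx).2 (Set.mem_iUnion.mpr ⟨0, hxU⟩)
  obtain ⟨t, ht⟩ := hMc.isCompact.elim_finite_subcover _ hopen hcover
  refine ⟨t.sup id, fun m => ?_⟩
  obtain ⟨k, hkt, hk⟩ := Set.mem_iUnion₂.mp (ht (hMT.iterate m hx))
  refine ⟨k, Finset.le_sup (f := id) hkt, ?_⟩
  rw [Nat.add_comm, Function.iterate_add_apply]
  exact hk
end

section
/- Let X be a compact metric space, f : X → X a map, and ω : ℕ → Set X a sequence of subsets of X such that for every k the map f is continuous on the closure of ω(k). Let (p_m)_{m ∈ ℕ} be a sequence in X such that f^[k](p_m) ∈ ω(k) for all k ≤ m. Then there exist a strictly increasing sequence (m_j) of natural numbers and points z : ℕ → X such that for every k ∈ ℕ: f^[k](p_{m_j}) converges to z(k) as j → ∞, z(k) lies in the closure of ω(k), and z(k+1) = f(z(k)). -/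
/-!
No diagonal argument is needed: if `p (m j) → a` along a subsequence, then `z k = f^[k] a` works.
Convergence propagates along the orbit by induction on `k`, because the `k`-th iterates of
`p (m j)` eventually lie in `closure (ω k)`, a closed set which therefore contains their limit
and on which `f` is continuous.
-/

open Filter Topology

/-- Abstract form of Lemma 5.2: from a sequence of points whose iterates lie in
prescribed sets on which f is continuous, one extracts a subsequence whose iterates
converge to a "generalised trajectory" (z k) with z (k+1) = f (z k). -/
theorem exists_subseq_tendsto_generalised_trajectory
    {X : Type*} [MetricSpace X] [CompactSpace X]
    (f : X → X) (ω : ℕ → Set X)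
    (hf : ∀ k : ℕ, ContinuousOn f (closure (ω k)))
    (p : ℕ → X) (hp : ∀ m k : ℕ, k ≤ m → f^[k] (p m) ∈ ω k) :
    ∃ m : ℕ → ℕ, StrictMono m ∧ ∃ z : ℕ → X, ∀ k : ℕ,
      Tendsto (fun j => f^[k] (p (m j))) atTop (𝓝 (z k)) ∧
      z k ∈ closure (ω k) ∧ z (k + 1) = f (z k) := by
  obtain ⟨a, m, hm, ha⟩ := CompactSpace.tendsto_subseq p
  have hmem : ∀ k, ∀ᶠ j in atTop, f^[k] (p (m j)) ∈ closure (ω k) := fun k => by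
    filter_upwards [eventually_ge_atTop k] with j hj
    exact subset_closure (hp _ _ (hj.trans (hm.id_le j)))
  have hlim : ∀ k, Tendsto (fun j => f^[k] (p (m j))) atTop (𝓝 (f^[k] a)) := by
    intro k
    induction k with
    | zero => exact ha
    | succ k ih =>
      have hcl : f^[k] a ∈ closure (ω k) := isClosed_closure.mem_of_tendsto ih (hmem k)
      simp only [Function.iterate_succ_apply']
      exact (hf k _ hcl).tendsto.comp (tendsto_nhdsWithin_iff.2 ⟨ih, hmem k⟩)
  exact ⟨m, hm, fun k => f^[k] a, fun k => ⟨hlim k,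
    isClosed_closure.mem_of_tendsto (hlim k) (hmem k), Function.iterate_succ_apply' f k a⟩⟩
end
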